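/- arXiv:1706.04442 — 2 statements merged into one kernel-verified Lean document; each statement's English description precedes it below -/
import Mathlib

section
/- Let B_max ≥ 0, μ_t ∈ ℝ, and let E, p, B : ℕ → ℝ and a : ℕ → Bool satisfy: E(n) ≥ 0 and 0 ≤ p(n) ≤ B(n) for all n ≥ 1, the battery recursion B(n+1) = min(max(0, B(n) + E(n) − p(n)), B_max) for all n ≥ 1, and (1/N)·∑_{n=1}^N E(n) → μ_t as N → ∞. Then liminf_{N→∞} (1/N)·∑_{n=1}^N (if a(n) then log(1 + p(n)) else 0) ≤ log(1 + μ_t). -/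
/-!
Overflow only loses energy, so the energy spent in the first `N` slots is at most the initial charge
plus the energy harvested, and the initial charge is negligible after division by `N`. By Jensen's
inequality the mean rate is at most the rate at the mean power; monotonicity and continuity of the
rate function then give the bound in the limit.
-/

open Filter Finset Topology

/-- The mean of `u 1, …, u N`, as used for long-term averages over slots numbered from `1`.
Its value at `N = 0` is `0`. -/
noncomputable def cesaroMean (u : ℕ → ℝ) (N : ℕ) : ℝ :=
  (1 / (N : ℝ)) * ∑ n ∈ Icc 1 N, u n

section CesaroMean

variable {u v : ℕ → ℝ}

lemma cesaroMean_mono (huv : ∀ n, 1 ≤ n → u n ≤ v n) (N : ℕ) :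
    cesaroMean u N ≤ cesaroMean v N :=
  mul_le_mul_of_nonneg_left (sum_le_sum fun n hn ↦ huv n (mem_Icc.mp hn).1) (by positivity)

lemma cesaroMean_nonneg (hu : ∀ n, 1 ≤ n → 0 ≤ u n) (N : ℕ) : 0 ≤ cesaroMean u N :=
  mul_nonneg (by positivity) (sum_nonneg fun n hn ↦ hu n (mem_Icc.mp hn).1)

lemma cesaroMean_comp_le_of_concaveOn {s : Set ℝ} {g : ℝ → ℝ} (hg : ConcaveOn ℝ s g)
    (hu : ∀ n, 1 ≤ n → u n ∈ s) {N : ℕ} (hN : N ≠ 0) :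
    cesaroMean (fun n ↦ g (u n)) N ≤ g (cesaroMean u N) := by
  have weights_sum : ∑ _n ∈ Icc 1 N, 1 / (N : ℝ) = 1 := by simp [hN]
  have jensen := hg.le_map_sum (fun _ _ ↦ by positivity) weights_sum
    fun n hn ↦ hu n (mem_Icc.mp hn).1
  simpa only [cesaroMean, smul_eq_mul, mul_sum] using jensen

end CesaroMean

/-- `g x` is the reward for spending energy `x ≥ 0` in one slot: a rate function in the sense of
power allocation problems, the model case being `log (1 + x)`. -/
structure IsRateFunction (g : ℝ → ℝ) : Prop where
  concaveOn : ConcaveOn ℝ (Set.Ici 0) g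
  monotoneOn : MonotoneOn g (Set.Ici 0)
  continuousOn : ContinuousOn g (Set.Ici 0)
  zero_nonneg : 0 ≤ g 0

lemma IsRateFunction.nonneg {g : ℝ → ℝ} (hg : IsRateFunction g) {x : ℝ} (hx : 0 ≤ x) : 0 ≤ g x :=
  hg.zero_nonneg.trans (hg.monotoneOn Set.self_mem_Ici hx hx)

lemma isRateFunction_log_one_add : IsRateFunction fun x ↦ Real.log (1 + x) where
  concaveOn := (strictConcaveOn_log_Ioi.concaveOn.translate_right 1).subset
    (fun x (hx : 0 ≤ x) ↦ show 0 < 1 + x by positivity) (convex_Ici 0)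
  monotoneOn _ hx _ _ hxy :=
    Real.log_le_log (add_pos_of_pos_of_nonneg one_pos hx) (by gcongr)
  continuousOn := ContinuousOn.log (by fun_prop) fun _ hx ↦
    (add_pos_of_pos_of_nonneg one_pos hx).ne'
  zero_nonneg := by simp

/-- The time-averaged reward over slots `1, …, N` when energy `p n` is spent in slot `n` and only
the slots with `a n` count. -/
noncomputable def throughput (g : ℝ → ℝ) (a : ℕ → Bool) (p : ℕ → ℝ) : ℕ → ℝ :=
  cesaroMean fun n ↦ if a n then g (p n) else 0

section Throughput

variable {g : ℝ → ℝ} {p : ℕ → ℝ}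

lemma throughput_nonneg (hg : IsRateFunction g) (a : ℕ → Bool) (hp : ∀ n, 1 ≤ n → 0 ≤ p n)
    (N : ℕ) : 0 ≤ throughput g a p N := by
  refine cesaroMean_nonneg (fun n hn ↦ ?_) N
  split_ifs
  exacts [hg.nonneg (hp n hn), le_rfl]

lemma isBoundedUnder_ge_throughput (hg : IsRateFunction g) (a : ℕ → Bool)
    (hp : ∀ n, 1 ≤ n → 0 ≤ p n) : IsBoundedUnder (· ≥ ·) atTop (throughput g a p) :=
  isBoundedUnder_of ⟨0, throughput_nonneg hg a hp⟩

lemma throughput_le_apply_cesaroMean (hg : IsRateFunction g) (a : ℕ → Bool)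
    (hp : ∀ n, 1 ≤ n → 0 ≤ p n) {N : ℕ} (hN : N ≠ 0) :
    throughput g a p N ≤ g (cesaroMean p N) := by
  refine le_trans (cesaroMean_mono (fun n hn ↦ ?_) N)
    (cesaroMean_comp_le_of_concaveOn hg.concaveOn hp hN)
  split_ifs
  exacts [le_rfl, hg.nonneg (hp n hn)]

end Throughput

/-- Spending `p` is sustained by harvesting `E` with battery levels `B`, from slot `1` on. The
battery balance is an inequality, so any loss, in particular overflow of a finite battery, is
allowed. -/
structure IsEnergyCausal (E p B : ℕ → ℝ) : Prop where
  power_nonneg : ∀ n, 1 ≤ n → 0 ≤ p n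
  battery_nonneg : ∀ n, 1 ≤ n → 0 ≤ B n
  battery_succ_le : ∀ n, 1 ≤ n → B (n + 1) ≤ B n + E n - p n

lemma isEnergyCausal_of_finite_battery {Bmax : ℝ} {E p B : ℕ → ℝ}
    (hE : ∀ n, 1 ≤ n → 0 ≤ E n) (hp : ∀ n, 1 ≤ n → 0 ≤ p n ∧ p n ≤ B n)
    (hrec : ∀ n, 1 ≤ n → B (n + 1) = min (max 0 (B n + E n - p n)) Bmax) :
    IsEnergyCausal E p B where
  power_nonneg n hn := (hp n hn).1
  battery_nonneg n hn := (hp n hn).1.trans (hp n hn).2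
  battery_succ_le n hn := by
    have balance_nonneg : 0 ≤ B n + E n - p n := by linarith [hE n hn, (hp n hn).2]
    rw [hrec n hn, max_eq_right balance_nonneg]
    exact min_le_left _ _

/-- Initial charge plus energy harvested in slots `1, …, N`, divided by `N`. -/
noncomputable def meanEnergyBudget (E B : ℕ → ℝ) (N : ℕ) : ℝ :=
  1 / (N : ℝ) * B 1 + cesaroMean E N

namespace IsEnergyCausal

variable {g : ℝ → ℝ} {μ : ℝ} {E p B : ℕ → ℝ}

lemma sum_power_add_battery_le (h : IsEnergyCausal E p B) (N : ℕ) :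
    ∑ n ∈ Icc 1 N, p n + B (N + 1) ≤ B 1 + ∑ n ∈ Icc 1 N, E n := by
  induction N with
  | zero => simp
  | succ N ih =>
    rw [sum_Icc_succ_top (by lia), sum_Icc_succ_top (by lia)]
    linarith [h.battery_succ_le (N + 1) (by lia)]

lemma cesaroMean_power_le_meanEnergyBudget (h : IsEnergyCausal E p B) (N : ℕ) :
    cesaroMean p N ≤ meanEnergyBudget E B N := by
  rw [cesaroMean, meanEnergyBudget, cesaroMean, ← mul_add]
  gcongr
  linarith [h.sum_power_add_battery_le N, h.battery_nonneg (N + 1) (by lia)]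

lemma meanEnergyBudget_nonneg (h : IsEnergyCausal E p B) (N : ℕ) :
    0 ≤ meanEnergyBudget E B N :=
  (cesaroMean_nonneg h.power_nonneg N).trans (h.cesaroMean_power_le_meanEnergyBudget N)

lemma throughput_le_apply_meanEnergyBudget (h : IsEnergyCausal E p B) (hg : IsRateFunction g)
    (a : ℕ → Bool) {N : ℕ} (hN : N ≠ 0) :
    throughput g a p N ≤ g (meanEnergyBudget E B N) :=
  (throughput_le_apply_cesaroMean hg a h.power_nonneg hN).trans <|
    hg.monotoneOn (cesaroMean_nonneg h.power_nonneg N) (h.meanEnergyBudget_nonneg N)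
      (h.cesaroMean_power_le_meanEnergyBudget N)

lemma tendsto_apply_meanEnergyBudget (h : IsEnergyCausal E p B) (hg : IsRateFunction g)
    (hE : Tendsto (cesaroMean E) atTop (𝓝 μ)) :
    Tendsto (fun N ↦ g (meanEnergyBudget E B N)) atTop (𝓝 (g μ)) := by
  have budget_tendsto : Tendsto (meanEnergyBudget E B) atTop (𝓝 μ) := by
    simpa only [zero_mul, zero_add] using! (tendsto_one_div_atTop_nhds_zero_nat.mul_const _).add hE
  have mean_nonneg : 0 ≤ μ := ge_of_tendsto' budget_tendsto h.meanEnergyBudget_nonneg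
  exact (hg.continuousOn μ mean_nonneg).tendsto.comp <|
    tendsto_nhdsWithin_iff.mpr ⟨budget_tendsto, .of_forall h.meanEnergyBudget_nonneg⟩

lemma isBoundedUnder_le_throughput (h : IsEnergyCausal E p B) (hg : IsRateFunction g)
    (hE : Tendsto (cesaroMean E) atTop (𝓝 μ)) (a : ℕ → Bool) :
    IsBoundedUnder (· ≤ ·) atTop (throughput g a p) :=
  (h.tendsto_apply_meanEnergyBudget hg hE).isBoundedUnder_le.mono_le <|
    (eventually_ne_atTop 0).mono fun _ ↦ h.throughput_le_apply_meanEnergyBudget hg a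

lemma liminf_throughput_le_limsup (h : IsEnergyCausal E p B) (hg : IsRateFunction g)
    (hE : Tendsto (cesaroMean E) atTop (𝓝 μ)) (a : ℕ → Bool) :
    liminf (throughput g a p) atTop ≤ limsup (throughput g a p) atTop :=
  liminf_le_limsup (h.isBoundedUnder_le_throughput hg hE a)
    (isBoundedUnder_ge_throughput hg a h.power_nonneg)

end IsEnergyCausal

theorem stmt_4_general {g : ℝ → ℝ} {μ : ℝ} {E p B : ℕ → ℝ} (h : IsEnergyCausal E p B)
    (hg : IsRateFunction g) (hE : Tendsto (cesaroMean E) atTop (𝓝 μ)) (a : ℕ → Bool) :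
    limsup (throughput g a p) atTop ≤ g μ := by
  have budget_tendsto := h.tendsto_apply_meanEnergyBudget hg hE
  calc limsup (throughput g a p) atTop
      ≤ limsup (fun N ↦ g (meanEnergyBudget E B N)) atTop :=
        limsup_le_limsup
          ((eventually_ne_atTop 0).mono fun _ ↦ h.throughput_le_apply_meanEnergyBudget hg a)
          (isBoundedUnder_ge_throughput hg a h.power_nonneg).isCoboundedUnder_le
          budget_tendsto.isBoundedUnder_le
    _ = g μ := budget_tendsto.limsup_eq

/-- Per-sample-path form of Lemma 1(a): for a transmitter battery evolving by energy
conservation with Cesàro-mean harvesting rate `μt`, the long-term time-averaged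
throughput is at most `log(1 + μt)`. -/
theorem stmt_4 (Bmax μt : ℝ) (hBmax : 0 ≤ Bmax) (E p B : ℕ → ℝ) (a : ℕ → Bool)
    (hE : ∀ n, 1 ≤ n → 0 ≤ E n)
    (hp : ∀ n, 1 ≤ n → 0 ≤ p n ∧ p n ≤ B n)
    (hrec : ∀ n, 1 ≤ n → B (n + 1) = min (max 0 (B n + E n - p n)) Bmax)
    (hconv : Filter.Tendsto
      (fun N : ℕ => (1 / (N : ℝ)) * ∑ n ∈ Finset.Icc 1 N, E n)
      Filter.atTop (nhds μt)) :
    Filter.liminf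
      (fun N : ℕ => (1 / (N : ℝ)) * ∑ n ∈ Finset.Icc 1 N,
        (if a n then Real.log (1 + p n) else 0))
      Filter.atTop ≤ Real.log (1 + μt) := by
  have h := isEnergyCausal_of_finite_battery hE hp hrec
  exact (h.liminf_throughput_le_limsup isRateFunction_log_one_add hconv a).trans
    (stmt_4_general h isRateFunction_log_one_add hconv a)
end

section
/- Let N ≥ 1 be a natural number, R, μ_r, μ_t > 0 with μ_r ≤ R, let S ⊆ {1, …, N} be a finite set of slots with |S| ≤ N·μ_r/R, and let p : ℕ → ℝ with p(n) ≥ 0 for all n ∈ S and ∑_{n∈S} p(n) ≤ N·μ_t. Then (1/N)·∑_{n∈S} log(1 + p(n)) ≤ (μ_r/R)·log(1 + R·μ_t/μ_r). -/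
/-!
Apply Jensen's inequality to the concave function `x ↦ log (1 + x)` with weight `1 / K` at each
`p n` and the remaining weight `1 - |S| / K` at `0`, where `K = N μr / R` bounds the number of
active slots. The point `0` contributes `log 1 = 0`, so the slots left unused need no separate
monotonicity argument in `|S|`.
-/

open Set

section Jensen

variable {𝕜 E β ι : Type*} [Field 𝕜] [LinearOrder 𝕜] [IsStrictOrderedRing 𝕜]
  [AddCommGroup β] [PartialOrder β] [IsOrderedAddMonoid β] [Module 𝕜 β] [IsStrictOrderedModule 𝕜 β]

theorem sum_map_le_smul_map_inv_smul_sum_of_concaveOn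
    [AddCommGroup E] [Module 𝕜 E]
    {s : Set E} {f : E → β} (hf : ConcaveOn 𝕜 s f) (h_mem : 0 ∈ s) (hf_zero : 0 ≤ f 0)
    {t : Finset ι} {K : 𝕜} (hK : 0 < K) (ht : (t.card : 𝕜) ≤ K)
    {p : ι → E} (hp : ∀ i ∈ t, p i ∈ s) :
    ∑ i ∈ t, f (p i) ≤ K • f (K⁻¹ • ∑ i ∈ t, p i) := by
  have unused_weight_nonneg : 0 ≤ 1 - t.card * K⁻¹ := by
    rwa [sub_nonneg, ← div_eq_mul_inv, div_le_one hK]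
  have weights_sum : 1 - t.card * K⁻¹ + ∑ _i ∈ t, K⁻¹ = 1 := by
    rw [Finset.sum_const, nsmul_eq_mul, sub_add_cancel]
  have jensen := hf.map_add_sum_le (fun _ _ ↦ (inv_pos.2 hK).le) weights_sum hp
    unused_weight_nonneg h_mem
  rw [smul_zero, zero_add, ← Finset.smul_sum, ← Finset.smul_sum] at jensen
  rw [← inv_smul_le_iff_of_pos hK]
  exact (le_add_of_nonneg_left (smul_nonneg unused_weight_nonneg hf_zero)).trans jensen

theorem sum_map_le_smul_map_div_of_concaveOn_of_monotoneOn
    {f : 𝕜 → β} (hf : ConcaveOn 𝕜 (Ici 0) f) (hf_mono : MonotoneOn f (Ici 0)) (hf_zero : 0 ≤ f 0)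
    {t : Finset ι} {K P : 𝕜} (hK : 0 < K) (ht : (t.card : 𝕜) ≤ K)
    {p : ι → 𝕜} (hp : ∀ i ∈ t, 0 ≤ p i) (hsum : ∑ i ∈ t, p i ≤ P) :
    ∑ i ∈ t, f (p i) ≤ K • f (P / K) := by
  have mean_nonneg : 0 ≤ (∑ i ∈ t, p i) / K := div_nonneg (Finset.sum_nonneg hp) hK.le
  have mean_le : (∑ i ∈ t, p i) / K ≤ P / K := by gcongr
  calc
    ∑ i ∈ t, f (p i) ≤ K • f ((∑ i ∈ t, p i) / K) := by
      simpa only [smul_eq_mul, inv_mul_eq_div] using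
        sum_map_le_smul_map_inv_smul_sum_of_concaveOn hf self_mem_Ici hf_zero hK ht hp
    _ ≤ K • f (P / K) :=
      smul_le_smul_of_nonneg_left
        (hf_mono mean_nonneg (mean_nonneg.trans mean_le) mean_le) hK.le

end Jensen

theorem concaveOn_log_one_add : ConcaveOn ℝ (Ioi (-1)) fun x ↦ Real.log (1 + x) := by
  simpa [Function.comp_def] using strictConcaveOn_log_Ioi.concaveOn.translate_right (1 : ℝ)

theorem monotoneOn_log_one_add : MonotoneOn (fun x ↦ Real.log (1 + x)) (Ioi (-1)) :=
  fun _ hx _ _ hxy ↦ Real.log_le_log (neg_lt_iff_pos_add'.1 hx) (by gcongr)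

theorem sum_log_one_add_le_mul_log_one_add_div {ι : Type*} {t : Finset ι} {K P : ℝ}
    (hK : 0 < K) (ht : (t.card : ℝ) ≤ K)
    {p : ι → ℝ} (hp : ∀ i ∈ t, 0 ≤ p i) (hsum : ∑ i ∈ t, p i ≤ P) :
    ∑ i ∈ t, Real.log (1 + p i) ≤ K * Real.log (1 + P / K) := by
  have nonneg_subset : Ici (0 : ℝ) ⊆ Ioi (-1) := Ici_subset_Ioi.2 neg_one_lt_zero
  exact sum_map_le_smul_map_div_of_concaveOn_of_monotoneOn
    (concaveOn_log_one_add.subset nonneg_subset (convex_Ici 0))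
    (monotoneOn_log_one_add.mono nonneg_subset) (by simp) hK ht hp hsum

theorem stmt_7_general {ι : Type*} {N R μr μt : ℝ} (hN : 0 < N) (hR : 0 < R) (hμr : 0 < μr)
    {S : Finset ι} (hcard : (S.card : ℝ) ≤ N * μr / R)
    {p : ι → ℝ} (hp : ∀ n ∈ S, 0 ≤ p n) (hsum : ∑ n ∈ S, p n ≤ N * μt) :
    (1 / N) * ∑ n ∈ S, Real.log (1 + p n) ≤ (μr / R) * Real.log (1 + R * μt / μr) := by
  have energy_per_slot : N * μt / (N * μr / R) = R * μt / μr := by field_simp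
  calc
    (1 / N) * ∑ n ∈ S, Real.log (1 + p n)
        ≤ (1 / N) * (N * μr / R * Real.log (1 + N * μt / (N * μr / R))) := by
      gcongr
      exact sum_log_one_add_le_mul_log_one_add_div (by positivity) hcard hp hsum
    _ = (μr / R) * Real.log (1 + R * μt / μr) := by
      rw [energy_per_slot]
      field_simp

/-- Finite-horizon form of the upper bound in Lemma 1(b): if the receiver can be on
in at most `N·μr/R` of the first `N` slots and the total transmit energy is at most
`N·μt`, the time-averaged throughput is at most `(μr/R)·log(1 + R·μt/μr)`. -/
theorem stmt_7 (N : ℕ) (hN : 1 ≤ N) (R μr μt : ℝ)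
    (hR : 0 < R) (hμr : 0 < μr) (hμt : 0 < μt) (hle : μr ≤ R)
    (S : Finset ℕ) (hSsub : S ⊆ Finset.Icc 1 N)
    (hcard : (S.card : ℝ) ≤ (N : ℝ) * μr / R)
    (p : ℕ → ℝ) (hp : ∀ n ∈ S, 0 ≤ p n)
    (hsum : ∑ n ∈ S, p n ≤ (N : ℝ) * μt) :
    (1 / (N : ℝ)) * ∑ n ∈ S, Real.log (1 + p n) ≤
      (μr / R) * Real.log (1 + R * μt / μr) := by
  exact stmt_7_general (Nat.cast_pos.2 hN) hR hμr hcard hp hsum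
end
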